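/- Assume additionally that K is algebraically closed. Then u and u' are conjugate in GL_10(K); that is, there exists an invertible 10×10 matrix g over K with g u g⁻¹ = u'. -/

import Mathlib

open Matrix

/-- `E i j`: the 10×10 matrix with a single `1` in position `(i, j)`. -/
def Emat (K : Type*) [Field K] (i j : Fin 10) : Matrix (Fin 10) (Fin 10) K :=
  Matrix.single i j 1

/-- The antidiagonal Gram matrix `J` of the alternating form `β(v, w) = vᵀ J w`. -/
def Jmat (K : Type*) [Field K] : Matrix (Fin 10) (Fin 10) K :=
  Matrix.of fun i j => if (i : ℕ) + (j : ℕ) = 9 then 1 else 0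

/-- The generator `A = I + E₁,₅ + E₁,₁₀ + E₆,₁₀` (1-indexed). -/
def Amat (K : Type*) [Field K] : Matrix (Fin 10) (Fin 10) K :=
  1 + Emat K 0 4 + Emat K 0 9 + Emat K 5 9

/-- The generator `B = E₂,₁ + E₃,₂ + E₄,₃ + E₅,₄ + E₁₀,₅ + E₉,₁₀ + E₈,₉ + E₇,₈ + E₆,₇ + E₁,₆`
(1-indexed). -/
def Bmat (K : Type*) [Field K] : Matrix (Fin 10) (Fin 10) K :=
  Emat K 1 0 + Emat K 2 1 + Emat K 3 2 + Emat K 4 3 + Emat K 9 4 +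
    Emat K 8 9 + Emat K 7 8 + Emat K 6 7 + Emat K 5 6 + Emat K 0 5

/-- `u = B⁴AB⁶AB⁵A`. -/
def uMat (K : Type*) [Field K] : Matrix (Fin 10) (Fin 10) K :=
  Bmat K ^ 4 * Amat K * Bmat K ^ 6 * Amat K * Bmat K ^ 5 * Amat K

/-- `u' = BAB²AB⁴AB³A`. -/
def u'Mat (K : Type*) [Field K] : Matrix (Fin 10) (Fin 10) K :=
  Bmat K * Amat K * Bmat K ^ 2 * Amat K * Bmat K ^ 4 * Amat K * Bmat K ^ 3 * Amat K

/-!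
Both `u` and `u'` are unipotent with Jordan blocks of sizes `6, 2, 2`. A nilpotent endomorphism is
determined up to conjugacy by the lengths of its Jordan chains, and a family of chains whose last
vectors are linearly independent and whose lengths add up to the dimension is a full Jordan basis.
Hence it suffices to exhibit, for each of `u - 1` and `u' - 1`, three vectors generating chains of
lengths `6, 2, 2` with linearly independent last vectors.
-/

/-- The vectors `v i` generate Jordan chains `v i, f (v i), …, f ^ h i (v i)` of `f` for the
eigenvalue `0`, with linearly independent last vectors. The chains have lengths `h i + 1`: recording
`h i` rather than the length avoids truncated subtraction. -/
structure GeneratesJordanChains {ι R M : Type*} [Semiring R] [AddCommMonoid M] [Module R M]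
    (f : Module.End R M) (h : ι → ℕ) (v : ι → M) : Prop where
  pow_succ_apply_eq_zero : ∀ i, (f ^ (h i + 1)) (v i) = 0
  linearIndependent_pow_apply : LinearIndependent R fun i => (f ^ h i) (v i)

namespace GeneratesJordanChains

section Semiring

variable {ι R M : Type*} [Semiring R] [AddCommMonoid M] [Module R M]
  {f : Module.End R M} {h : ι → ℕ} {v : ι → M}

theorem pow_apply_eq_zero (hv : GeneratesJordanChains f h v) {i : ι} {n : ℕ} (hn : h i < n) :
    (f ^ n) (v i) = 0 :=
  Module.End.pow_map_zero_of_le hn (hv.pow_succ_apply_eq_zero i)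

theorem of_pow_apply_eq {w : ι → M} (hvw : ∀ i, (f ^ h i) (v i) = w i) (hw : ∀ i, f (w i) = 0)
    (hindep : LinearIndependent R w) : GeneratesJordanChains f h v where
  pow_succ_apply_eq_zero i := by rw [pow_succ', Module.End.mul_apply, hvw, hw]
  linearIndependent_pow_apply := by simpa only [hvw] using hindep

theorem linearIndepOn_pow_apply (hv : GeneratesJordanChains f h v) (m : ℕ) :
    LinearIndepOn R (fun p : Σ i, Fin (h i + 1) => (f ^ h p.1) (v p.1))
      {p | h p.1 = p.2 + m} := by
  refine hv.linearIndependent_pow_apply.comp (fun p : {p : Σ i, Fin (h i + 1) | _} => p.1.1) ?_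
  rintro ⟨⟨i, j⟩, hj⟩ ⟨⟨i', j'⟩, hj'⟩ (rfl : i = i')
  obtain rfl : j = j' := Fin.ext <| Nat.add_right_cancel <| hj.symm.trans hj'
  rfl

end Semiring

section Ring

variable {ι R M : Type*} [Ring R] [AddCommGroup M] [Module R M]
  {f : Module.End R M} {h : ι → ℕ} {v : ι → M}

-- In a nontrivial relation, pick a term whose distance `m` to the end of its chain is maximal:
-- `f ^ m` sends the terms at distance `m` to last vectors and kills all the others.
theorem linearIndependent (hv : GeneratesJordanChains f h v) :
    LinearIndependent R fun p : Σ i, Fin (h i + 1) => (f ^ (p.2 : ℕ)) (v p.1) := by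
  classical
  refine linearIndependent_iff'.2 fun s c hsum => ?_
  by_contra! ⟨p₀, hp₀, hcp₀⟩
  obtain ⟨q, hq, hmax⟩ := {p ∈ s | c p ≠ 0}.exists_max_image (fun p => h p.1 - (p.2 : ℕ))
    ⟨p₀, Finset.mem_filter.2 ⟨hp₀, hcp₀⟩⟩
  obtain ⟨hqs, hcq⟩ := Finset.mem_filter.1 hq
  obtain ⟨m, hm⟩ : ∃ m, h q.1 = q.2 + m :=
    Nat.exists_eq_add_of_le (Nat.le_of_lt_succ q.2.isLt)
  have hshift : ∀ p ∈ s, c p • (f ^ (p.2 + m : ℕ)) (v p.1) =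
      if h p.1 = p.2 + m then c p • (f ^ h p.1) (v p.1) else 0 := by
    intro p hp
    split_ifs with hend
    · rw [← hend]
    · by_cases hcp : c p = 0
      · rw [hcp, zero_smul]
      · have hle := hmax p (Finset.mem_filter.2 ⟨hp, hcp⟩)
        rw [hv.pow_apply_eq_zero (by omega), smul_zero]
  have hlast : ∑ p ∈ s with h p.1 = p.2 + m, c p • (f ^ h p.1) (v p.1) = 0 := by
    rw [Finset.sum_filter, ← Finset.sum_congr rfl hshift]
    simpa [← Module.End.mul_apply, ← pow_add, add_comm] using congrArg (f ^ m) hsum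
  have hindep := (hv.linearIndepOn_pow_apply m).mono
    (t := ↑{p ∈ s | h p.1 = p.2 + m}) fun p hp => (Finset.mem_filter.1 hp).2
  exact hcq <| linearIndepOn_finset_iff.1 hindep c hlast q <|
    Finset.mem_filter.2 ⟨hqs, hm⟩

end Ring

section DivisionRing

variable {ι K V : Type*} [Fintype ι] [DivisionRing K] [AddCommGroup V] [Module K V]
  [FiniteDimensional K V] {f g : Module.End K V} {h : ι → ℕ} {v w : ι → V}

theorem exists_basis (hv : GeneratesJordanChains f h v)
    (hdim : ∑ i, (h i + 1) = Module.finrank K V) :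
    ∃ b : Module.Basis (Σ i, Fin (h i + 1)) K V, ∀ p, b p = (f ^ (p.2 : ℕ)) (v p.1) := by
  have hcard : Fintype.card (Σ i, Fin (h i + 1)) = Module.finrank K V := by
    simpa using hdim
  exact ⟨.mk hv.linearIndependent
    (hv.linearIndependent.span_eq_top_of_card_eq_finrank' hcard).ge, by simp⟩

theorem isConj (hv : GeneratesJordanChains f h v) (hw : GeneratesJordanChains g h w)
    (hdim : ∑ i, (h i + 1) = Module.finrank K V) : IsConj f g := by
  obtain ⟨b, hb⟩ := hv.exists_basis hdim
  obtain ⟨b', hb'⟩ := hw.exists_basis hdim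
  let e : V ≃ₗ[K] V := b.equiv b' (Equiv.refl _)
  have map_chain (i : ι) (n : ℕ) : e ((f ^ n) (v i)) = (g ^ n) (w i) := by
    rcases lt_or_ge (h i) n with hn | hn
    · rw [hv.pow_apply_eq_zero hn, hw.pow_apply_eq_zero hn, map_zero]
    · have map_basis := b.equiv_apply ⟨i, n, Nat.lt_succ_of_le hn⟩ b' (Equiv.refl _)
      rwa [hb, Equiv.refl_apply, hb'] at map_basis
  refine ⟨LinearMap.GeneralLinearGroup.ofLinearEquiv e, b.ext fun ⟨i, j⟩ => ?_⟩
  calc e (f (b ⟨i, j⟩))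
    _ = e ((f ^ (j + 1 : ℕ)) (v i)) := by rw [hb, pow_succ', Module.End.mul_apply]
    _ = g ((g ^ (j : ℕ)) (w i)) := by rw [map_chain, pow_succ', Module.End.mul_apply]
    _ = g (e (b ⟨i, j⟩)) := by rw [hb, map_chain]

end DivisionRing

end GeneratesJordanChains

theorem linearIndependent_of_comp_eq_single {ι n R : Type*} [DecidableEq ι] [Ring R]
    {w : ι → n → R} (π : ι → n) (hw : ∀ i, w i ∘ π = Pi.single i 1) : LinearIndependent R w := by
  have hcomp : LinearMap.funLeft R R π ∘ w = fun i => Pi.single i 1 := funext hw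
  exact .of_comp (LinearMap.funLeft R R π) (hcomp ▸ Pi.linearIndependent_single_one ι R)

theorem isConj_of_isConj_sub_one {R : Type*} [Ring R] {a b : R} (hab : IsConj (a - 1) (b - 1)) :
    IsConj a b := by
  obtain ⟨c, hc⟩ := hab
  exact ⟨c, by simpa using hc.add_right (SemiconjBy.one_right _)⟩

theorem isConj_of_isConj_toLinAlgEquiv' {n R : Type*} [Fintype n] [DecidableEq n] [CommSemiring R]
    {a b : Matrix n n R} (hab : IsConj (toLinAlgEquiv' a) (toLinAlgEquiv' b)) : IsConj a b := by
  simpa using (LinearMap.toMatrixAlgEquiv' : _ ≃ₐ[R] Matrix n n R).toMonoidHom.map_isConj hab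

section Generators

variable {K : Type*} [Field K]

theorem Emat_mulVec (i j : Fin 10) (x : Fin 10 → K) : Emat K i j *ᵥ x = Pi.single i (x j) := by
  rw [Emat, single_mulVec, one_mul, Pi.single]

theorem Amat_mulVec (x : Fin 10 → K) :
    Amat K *ᵥ x = ![x 0 + x 4 + x 9, x 1, x 2, x 3, x 4, x 5 + x 9, x 6, x 7, x 8, x 9] := by
  ext i
  fin_cases i <;> simp [Amat, add_mulVec, Emat_mulVec]

theorem Bmat_mulVec (x : Fin 10 → K) :
    Bmat K *ᵥ x = ![x 5, x 0, x 1, x 2, x 3, x 6, x 7, x 8, x 9, x 4] := by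
  ext i
  fin_cases i <;> simp [Bmat, add_mulVec, Emat_mulVec]

theorem uMat_mulVec (x : Fin 10 → K) :
    uMat K *ᵥ x =
      ![x 0 + x 4 + x 5 + 3 * x 9, x 8, x 7, x 0 + 2 * x 4 + x 6 + x 9,
        x 0 + x 3 + 2 * x 4 + x 5 + 2 * x 9, x 0 + 2 * x 4 + x 9, x 3, x 2, x 1,
        x 0 + x 4 + x 9] := by
  simp only [uMat, pow_succ, pow_zero, one_mul, ← mulVec_mulVec, Amat_mulVec, Bmat_mulVec,
    cons_val]
  ext i
  fin_cases i <;> simp <;> ring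

theorem u'Mat_mulVec (x : Fin 10 → K) :
    u'Mat K *ᵥ x =
      ![x 0 + x 2 + x 4 + x 8 + x 9, x 1 + x 2 + x 8 + x 9, x 2 + x 6,
        x 1 + x 2 + x 3 + x 6 + x 7, x 4, x 5 + x 9, x 6, x 1 + x 2 + x 7, x 2 + x 8, x 9] := by
  simp only [u'Mat, pow_succ, pow_zero, one_mul, ← mulVec_mulVec, Amat_mulVec, Bmat_mulVec,
    cons_val]
  ext i
  fin_cases i <;> simp <;> ring

theorem u'Mat_sub_one_mulVec (x : Fin 10 → K) :
    (u'Mat K - 1) *ᵥ x =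
      ![x 2 + x 4 + x 8 + x 9, x 2 + x 8 + x 9, x 6, x 1 + x 2 + x 6 + x 7, 0, x 9, 0, x 1 + x 2,
        x 2, 0] := by
  ext i
  fin_cases i <;> simp [sub_mulVec, u'Mat_mulVec] <;> ring

variable [CharP K 2]

theorem uMat_sub_one_mulVec (x : Fin 10 → K) :
    (uMat K - 1) *ᵥ x =
      ![x 4 + x 5 + x 9, x 1 + x 8, x 2 + x 7, x 0 + x 3 + x 6 + x 9, x 0 + x 3 + x 4 + x 5,
        x 0 + x 5 + x 9, x 3 + x 6, x 2 + x 7, x 1 + x 8, x 0 + x 4] := by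
  ext i
  fin_cases i <;> simp [sub_mulVec, uMat_mulVec] <;> grind

variable (K)

theorem generatesJordanChains_uMat_sub_one :
    GeneratesJordanChains (toLinAlgEquiv' (uMat K - 1)) ![5, 1, 1]
      ![![1, 0, 0, 0, 0, 0, 0, 0, 0, 0], ![0, 1, 0, 0, 0, 0, 0, 0, 0, 0],
        ![0, 0, 1, 0, 0, 0, 0, 0, 0, 0]] := by
  refine .of_pow_apply_eq
    (w := ![![1, 0, 0, 0, 1, 0, 0, 0, 0, 1], ![0, 1, 0, 0, 0, 0, 0, 0, 1, 0],
      ![0, 0, 1, 0, 0, 0, 0, 1, 0, 0]]) (fun i => ?_) (fun i => ?_) ?_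
  · fin_cases i <;> simp [-map_sub, pow_succ, uMat_sub_one_mulVec, CharTwo.add_self_eq_zero]
  · fin_cases i <;> simp [-map_sub, uMat_sub_one_mulVec, CharTwo.add_self_eq_zero]
  · refine linearIndependent_of_comp_eq_single ![0, 1, 2] fun i => ?_
    ext j
    fin_cases i <;> fin_cases j <;> simp

theorem generatesJordanChains_u'Mat_sub_one :
    GeneratesJordanChains (toLinAlgEquiv' (u'Mat K - 1)) ![5, 1, 1]
      ![![0, 0, 0, 0, 0, 0, 1, 0, 0, 0], ![0, 0, 0, 0, 1, 0, 0, 0, 0, 0],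
        ![0, 0, 0, 0, 0, 0, 0, 0, 1, 1]] := by
  refine .of_pow_apply_eq
    (w := ![![0, 0, 0, 1, 0, 0, 0, 0, 0, 0], ![1, 0, 0, 0, 0, 0, 0, 0, 0, 0],
      ![0, 0, 0, 0, 0, 1, 0, 0, 0, 0]]) (fun i => ?_) (fun i => ?_) ?_
  · fin_cases i <;> simp [-map_sub, pow_succ, u'Mat_sub_one_mulVec, CharTwo.add_self_eq_zero]
  · fin_cases i <;> simp [-map_sub, u'Mat_sub_one_mulVec]
  · refine linearIndependent_of_comp_eq_single ![3, 0, 5] fun i => ?_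
    ext j
    fin_cases i <;> fin_cases j <;> simp

theorem isConj_uMat_u'Mat : IsConj (uMat K) (u'Mat K) := by
  refine isConj_of_isConj_sub_one <| isConj_of_isConj_toLinAlgEquiv' <|
    (generatesJordanChains_uMat_sub_one K).isConj (generatesJordanChains_u'Mat_sub_one K) ?_
  simp [Fin.sum_univ_three]

end Generators

theorem statement12_general (K : Type*) [Field K] [CharP K 2] :
    ∃ g : (Matrix (Fin 10) (Fin 10) K)ˣ,
      (g : Matrix (Fin 10) (Fin 10) K) * uMat K * ((g⁻¹ : (Matrix (Fin 10) (Fin 10) K)ˣ) :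
        Matrix (Fin 10) (Fin 10) K) = u'Mat K := by
  obtain ⟨g, hg⟩ := isConj_uMat_u'Mat K
  exact ⟨g, g.mul_inv_eq_iff_eq_mul.2 hg⟩

/-- over an algebraically closed `K` of characteristic `2`, the elements `u`
and `u'` are conjugate in `GL₁₀(K)`: there is an invertible matrix `g` with `g u g⁻¹ = u'`. -/
theorem statement12 (K : Type*) [Field K] [CharP K 2] [IsAlgClosed K] :
    ∃ g : (Matrix (Fin 10) (Fin 10) K)ˣ,
      (g : Matrix (Fin 10) (Fin 10) K) * uMat K * ((g⁻¹ : (Matrix (Fin 10) (Fin 10) K)ˣ) :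
        Matrix (Fin 10) (Fin 10) K) = u'Mat K :=
  statement12_general K
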